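/- arXiv:2302.07688 — 2 statements merged into one kernel-verified Lean document; each statement's English description precedes it below -/
import Mathlib

section
/- Let n, m, t be natural numbers with t ≤ n, let S ⊆ Fin n with |S| = t, let ε ≥ 0, and let 𝓖 be a nonempty finite ε-almost-universal₂ family of functions from (Fin n → ZMod 2) to (Fin m → ZMod 2). On the probability space Ω = (Fin n → ZMod 2) × 𝓖 with the uniform measure, define the random variables K_au(x, g) = g(x), E(x, g) = the restriction of x to S, and G(x, g) = g. Then the mutual information (in nats) between the authentication key and the eavesdropper's view satisfies I[K_au : (E, G)] ≤ ln( 2^{m+t}/2^n + 2^m · ε ). -/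
/-- A finite family `𝓖` of functions from `R` to `T` is `ε`-almost-universal₂. -/
def AlmostUniversal₂ {R T : Type*} [DecidableEq T] (ε : ℝ) (𝓖 : Finset (R → T)) : Prop :=
  ∀ r r' : R, r ≠ r' →
    (((𝓖.filter fun g => g r = g r').card : ℝ) / (𝓖.card : ℝ)) ≤ ε

/-- Mutual information (in nats) between the finitely-valued random variables `X` and `Y`
on a finite probability space with probability mass function `P`. -/
noncomputable def mutualInfo {Ω A B : Type*} [Fintype Ω] [Fintype A] [Fintype B]
    [DecidableEq A] [DecidableEq B] (P : Ω → ℝ) (X : Ω → A) (Y : Ω → B) : ℝ :=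
  ∑ a : A, ∑ b : B,
    (∑ ω ∈ Finset.univ.filter (fun ω => X ω = a ∧ Y ω = b), P ω) *
      Real.log
        ((∑ ω ∈ Finset.univ.filter (fun ω => X ω = a ∧ Y ω = b), P ω) /
          ((∑ ω ∈ Finset.univ.filter (fun ω => X ω = a), P ω) *
            (∑ ω ∈ Finset.univ.filter (fun ω => Y ω = b), P ω)))

lemma term_bound (p pa q M c : ℝ) (hp : 0 ≤ p) (hpa : p ≤ pa) (hq : p ≤ q) (hM : 0 < M)
    (hc : 0 < c) :
    p * Real.log (p / (pa * q)) ≤ p * (Real.log c - 2) + M * p ^ 2 / q / c + p / pa / M := by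
  rcases hp.eq_or_lt with h | h
  · subst h; simp
  have hpa' : 0 < pa := by linarith
  have hq' : 0 < q := by linarith
  have e : p / (pa * q) = c * ((M * p / q / c) * (1 / (pa * M))) := by
    field_simp
  have h1 := Real.log_le_sub_one_of_pos (x := M * p / q / c) (by positivity)
  have h2 := Real.log_le_sub_one_of_pos (x := 1 / (pa * M)) (by positivity)
  rw [e, Real.log_mul (by positivity) (by positivity), Real.log_mul (by positivity) (by positivity)]
  have h3 : p * (Real.log c + (Real.log (M * p / q / c) + Real.log (1 / (pa * M)))) ≤
      p * (Real.log c + ((M * p / q / c - 1) + (1 / (pa * M) - 1))) := by gcongr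
  refine h3.trans (le_of_eq ?_)
  field_simp
  ring

lemma sum_joint_right {Ω A B : Type*} [Fintype Ω] [Fintype B]
    [DecidableEq A] [DecidableEq B] (P : Ω → ℝ) (X : Ω → A) (Y : Ω → B) (a : A) :
    ∑ b : B, ∑ ω ∈ Finset.univ.filter (fun ω => X ω = a ∧ Y ω = b), P ω
      = ∑ ω ∈ Finset.univ.filter (fun ω => X ω = a), P ω := by
  rw [← Finset.sum_fiberwise (Finset.univ.filter (fun ω => X ω = a)) Y P]
  simp only [Finset.filter_filter]

lemma mutualInfo_le {Ω A B : Type*} [Fintype Ω] [Fintype A] [Fintype B] [Nonempty A]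
    [DecidableEq A] [DecidableEq B] (P : Ω → ℝ) (X : Ω → A) (Y : Ω → B)
    (hP : ∀ ω, 0 ≤ P ω) (hP1 : ∑ ω, P ω = 1) (c : ℝ) (hc : 0 < c)
    (h : ∑ a : A, ∑ b : B, (Fintype.card A : ℝ) *
      (∑ ω ∈ Finset.univ.filter (fun ω => X ω = a ∧ Y ω = b), P ω) ^ 2 /
        (∑ ω ∈ Finset.univ.filter (fun ω => Y ω = b), P ω) ≤ c) :
    mutualInfo P X Y ≤ Real.log c := by
  have hM : (0 : ℝ) < Fintype.card A := by exact_mod_cast Fintype.card_pos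
  have h0 : ∑ a : A, ∑ b : B, ∑ ω ∈ Finset.univ.filter (fun ω => X ω = a ∧ Y ω = b), P ω = 1 := by
    simp only [sum_joint_right]
    rw [Finset.sum_fiberwise, hP1]
  have h2 : ∑ a : A, ∑ b : B, (∑ ω ∈ Finset.univ.filter (fun ω => X ω = a ∧ Y ω = b), P ω) /
      (∑ ω ∈ Finset.univ.filter (fun ω => X ω = a), P ω) / (Fintype.card A : ℝ) ≤ 1 := by
    simp only [← Finset.sum_div, sum_joint_right]
    rw [div_le_one hM]
    calc _ ≤ ∑ a : A, (1 : ℝ) := Finset.sum_le_sum fun a _ => div_self_le_one _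
      _ = _ := by simp
  unfold mutualInfo
  calc _ ≤ ∑ a : A, ∑ b : B,
        ((∑ ω ∈ Finset.univ.filter (fun ω => X ω = a ∧ Y ω = b), P ω) * (Real.log c - 2)
        + (Fintype.card A : ℝ) * (∑ ω ∈ Finset.univ.filter (fun ω => X ω = a ∧ Y ω = b), P ω) ^ 2 /
        (∑ ω ∈ Finset.univ.filter (fun ω => Y ω = b), P ω) / c
        + (∑ ω ∈ Finset.univ.filter (fun ω => X ω = a ∧ Y ω = b), P ω) /
      (∑ ω ∈ Finset.univ.filter (fun ω => X ω = a), P ω) / (Fintype.card A : ℝ)) := by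
        refine Finset.sum_le_sum fun a _ => Finset.sum_le_sum fun b _ => ?_
        refine term_bound _ _ _ _ _ (Finset.sum_nonneg fun ω _ => hP ω) ?_ ?_ hM hc
        · refine Finset.sum_le_sum_of_subset_of_nonneg ?_ (fun ω _ _ => hP ω)
          intro ω; simp +contextual
        · refine Finset.sum_le_sum_of_subset_of_nonneg ?_ (fun ω _ _ => hP ω)
          intro ω; simp +contextual
    _ ≤ _ := by
        simp only [Finset.sum_add_distrib, ← Finset.sum_mul]
        rw [h0]
        simp only [← Finset.sum_div] at h2 ⊢
        have := (div_le_one hc).2 h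
        linarith

lemma sum_sq_fiber {Ω A B : Type*} [Fintype Ω] [Fintype A] [Fintype B]
    [DecidableEq A] [DecidableEq B] (X : Ω → A) (Y : Ω → B) :
    ∑ a : A, ∑ b : B, ((Finset.univ.filter (fun ω => X ω = a ∧ Y ω = b)).card : ℝ) ^ 2
      = ∑ ω, ((Finset.univ.filter (fun ω' => X ω' = X ω ∧ Y ω' = Y ω)).card : ℝ) := by
  rw [← Finset.sum_fiberwise Finset.univ X]
  refine Finset.sum_congr rfl fun a _ => ?_
  rw [← Finset.sum_fiberwise (Finset.univ.filter (fun ω => X ω = a)) Y]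
  refine Finset.sum_congr rfl fun b _ => ?_
  rw [Finset.filter_filter, sq, ← nsmul_eq_mul]
  symm
  apply Finset.sum_eq_card_nsmul
  intro ω hω
  simp only [Finset.mem_filter, Finset.mem_univ, true_and] at hω
  rw [hω.1, hω.2]

lemma fiber_card (n t : ℕ) (S : Finset (Fin n)) (hS : S.card = t)
    (e : {i // i ∈ S} → ZMod 2) :
    (Finset.univ.filter (fun x : Fin n → ZMod 2 => (fun i : {i // i ∈ S} => x i) = e)).card
      = 2 ^ (n - t) := by
  have h1 : (Finset.univ.filter
      (fun x : Fin n → ZMod 2 => (fun i : {i // i ∈ S} => x i) = e)).card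
      = (Finset.univ : Finset ({i // ¬ i ∈ S} → ZMod 2)).card := by
    refine Finset.card_bij' (fun x _ => fun i => x i)
      (fun y _ => (Equiv.piEquivPiSubtypeProd (· ∈ S) (fun _ => ZMod 2)).symm (e, y)) ?_ ?_ ?_ ?_
    · intro x _; simp
    · intro y _
      simp only [Finset.mem_filter, Finset.mem_univ, true_and]
      funext i
      simp [Equiv.piEquivPiSubtypeProd]
    · intro x hx
      simp only [Finset.mem_filter, Finset.mem_univ, true_and] at hx
      subst hx
      exact (Equiv.piEquivPiSubtypeProd (· ∈ S) (fun _ => ZMod 2)).symm_apply_apply x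
    · intro y _
      funext i
      simp [Equiv.piEquivPiSubtypeProd, i.2]
  rw [h1, Finset.card_univ, Fintype.card_fun, ZMod.card, Fintype.card_subtype_compl]
  simp [hS]

lemma collision_bound (n m t : ℕ) (S : Finset (Fin n)) (hS : S.card = t)
    (ε : ℝ) (hε : 0 ≤ ε)
    (𝓖 : Finset ((Fin n → ZMod 2) → (Fin m → ZMod 2))) (h𝓖 : 𝓖.Nonempty)
    (hAU : AlmostUniversal₂ ε 𝓖) :
    ∑ ω : (Fin n → ZMod 2) × {g // g ∈ 𝓖},
      ((Finset.univ.filter (fun ω' : (Fin n → ZMod 2) × {g // g ∈ 𝓖} =>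
        (ω'.2 : (Fin n → ZMod 2) → (Fin m → ZMod 2)) ω'.1 = (ω.2 : _ → _) ω.1 ∧
        ((fun i : {i // i ∈ S} => ω'.1 i), ω'.2) =
          ((fun i : {i // i ∈ S} => ω.1 i), ω.2))).card : ℝ)
      ≤ 2 ^ n * (𝓖.card + 2 ^ (n - t) * (ε * 𝓖.card)) := by
  have hG : (0 : ℝ) < 𝓖.card := by exact_mod_cast h𝓖.card_pos
  have key : ∀ x : Fin n → ZMod 2, ∀ g : {g // g ∈ 𝓖},
      ((Finset.univ.filter (fun ω' : (Fin n → ZMod 2) × {g // g ∈ 𝓖} =>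
        (ω'.2 : (Fin n → ZMod 2) → (Fin m → ZMod 2)) ω'.1 = (g : _ → _) x ∧
        ((fun i : {i // i ∈ S} => ω'.1 i), ω'.2) =
          ((fun i : {i // i ∈ S} => x i), g))).card : ℝ)
      = ∑ x' ∈ Finset.univ.filter (fun x' : Fin n → ZMod 2 =>
          (fun i : {i // i ∈ S} => x' i) = (fun i : {i // i ∈ S} => x i)),
          if (g : (Fin n → ZMod 2) → (Fin m → ZMod 2)) x' = (g : _ → _) x then (1 : ℝ) else 0 := by
    intro x g
    rw [Finset.sum_boole, Finset.filter_filter]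
    congr 1
    refine Finset.card_bij' (fun ω _ => ω.1) (fun x' _ => (x', g)) ?_ ?_ ?_ ?_
    · rintro ⟨x', g'⟩ h
      simp only [Finset.mem_filter, Finset.mem_univ, true_and, Prod.mk.injEq] at h ⊢
      obtain ⟨h1, h2, rfl⟩ := h
      exact ⟨h2, h1⟩
    · intro x' h
      simp only [Finset.mem_filter, Finset.mem_univ, true_and, Prod.mk.injEq] at h ⊢
      exact ⟨h.2, h.1, trivial⟩
    · rintro ⟨x', g'⟩ h
      simp only [Finset.mem_filter, Finset.mem_univ, true_and, Prod.mk.injEq] at h ⊢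
      rw [h.2.2]
    · intro x' h
      rfl
  rw [Fintype.sum_prod_type]
  simp only [key]
  have hx : ∀ x : Fin n → ZMod 2, ∑ g : {g // g ∈ 𝓖},
      ∑ x' ∈ Finset.univ.filter (fun x' : Fin n → ZMod 2 =>
          (fun i : {i // i ∈ S} => x' i) = (fun i : {i // i ∈ S} => x i)),
          (if (g : (Fin n → ZMod 2) → (Fin m → ZMod 2)) x' = (g : _ → _) x then (1 : ℝ) else 0)
      ≤ 𝓖.card + 2 ^ (n - t) * (ε * 𝓖.card) := by
    intro x
    rw [Finset.sum_comm]
    calc _ ≤ ∑ x' ∈ Finset.univ.filter (fun x' : Fin n → ZMod 2 =>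
          (fun i : {i // i ∈ S} => x' i) = (fun i : {i // i ∈ S} => x i)),
          ((if x' = x then (𝓖.card : ℝ) else 0) + ε * 𝓖.card) := by
          refine Finset.sum_le_sum fun x' _ => ?_
          rw [Finset.sum_coe_sort 𝓖 (fun g => if g x' = g x then (1 : ℝ) else 0),
            Finset.sum_boole]
          split_ifs with h
          · have : ((𝓖.filter fun g => g x' = g x).card : ℝ) ≤ 𝓖.card := by
              exact_mod_cast Finset.card_filter_le _ _
            have := mul_nonneg hε hG.le
            linarith
          · have := hAU x' x h
            rw [div_le_iff₀ hG] at this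
            linarith
      _ = _ := by
          rw [Finset.sum_add_distrib, Finset.sum_const, fiber_card n t S hS, nsmul_eq_mul]
          simp
  calc _ ≤ ∑ x : Fin n → ZMod 2, ((𝓖.card : ℝ) + 2 ^ (n - t) * (ε * 𝓖.card)) :=
        Finset.sum_le_sum fun x _ => hx x
    _ = _ := by rw [Finset.sum_const, Finset.card_univ, nsmul_eq_mul]; simp [ZMod.card]


/-- Substitution-attack bound (paper's equations (7)/(11)): with `x` uniform on `n`-bit
strings and `g` uniform on an `ε`-almost-universal₂ family `𝓖` (jointly uniform on the
product), the mutual information between `K_au = g(x)` and the eavesdropper's view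
`(x|_S, g)` is at most `ln(2^{m+t}/2^n + 2^m·ε)`. -/
theorem stmt_5 (n m t : ℕ) (ht : t ≤ n) (S : Finset (Fin n)) (hS : S.card = t)
    (ε : ℝ) (hε : 0 ≤ ε)
    (𝓖 : Finset ((Fin n → ZMod 2) → (Fin m → ZMod 2))) (h𝓖 : 𝓖.Nonempty)
    (hAU : AlmostUniversal₂ ε 𝓖) :
    mutualInfo
      (fun _ : (Fin n → ZMod 2) × {g // g ∈ 𝓖} =>
        (Fintype.card ((Fin n → ZMod 2) × {g // g ∈ 𝓖}) : ℝ)⁻¹)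
      (fun ω => (ω.2 : (Fin n → ZMod 2) → (Fin m → ZMod 2)) ω.1)
      (fun ω => ((fun i : {i // i ∈ S} => ω.1 i), ω.2))
      ≤ Real.log ((2 : ℝ) ^ (m + t) / (2 : ℝ) ^ n + (2 : ℝ) ^ m * ε) := by
  have hG : (0 : ℝ) < 𝓖.card := by exact_mod_cast h𝓖.card_pos
  have hN : (Fintype.card ((Fin n → ZMod 2) × {g // g ∈ 𝓖}) : ℝ) = 2 ^ n * 𝓖.card := by
    simp [ZMod.card]
  have hF : (2 : ℝ) ^ n = 2 ^ (n - t) * 2 ^ t := by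
    rw [← pow_add, Nat.sub_add_cancel ht]
  refine mutualInfo_le _ _ _ (fun _ => by positivity) ?_ _ (by positivity) ?_
  · rw [Finset.sum_const, Finset.card_univ, nsmul_eq_mul, mul_inv_cancel₀]
    rw [hN]; positivity
  have hq : ∀ b : ({i // i ∈ S} → ZMod 2) × {g // g ∈ 𝓖},
      (Finset.univ.filter (fun ω : (Fin n → ZMod 2) × {g // g ∈ 𝓖} =>
        ((fun i : {i // i ∈ S} => ω.1 i), ω.2) = b)).card = 2 ^ (n - t) := by
    rintro ⟨e, g⟩
    rw [← fiber_card n t S hS e]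
    refine Finset.card_bij' (fun ω _ => ω.1) (fun x' _ => (x', g)) ?_ ?_ ?_ ?_
    · rintro ⟨x', g'⟩ h
      simp only [Finset.mem_filter, Finset.mem_univ, true_and, Prod.mk.injEq] at h ⊢
      exact h.1
    · intro x' h
      simp only [Finset.mem_filter, Finset.mem_univ, true_and, Prod.mk.injEq] at h ⊢
      exact ⟨h, trivial⟩
    · rintro ⟨x', g'⟩ h
      simp only [Finset.mem_filter, Finset.mem_univ, true_and, Prod.mk.injEq] at h ⊢
      rw [h.2]
    · intro x' h
      rfl
  have hA : (Fintype.card (Fin m → ZMod 2) : ℝ) = 2 ^ m := by simp [ZMod.card]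
  simp only [Finset.sum_const, nsmul_eq_mul, hq, hN, hA, mul_pow]
  simp only [← Finset.sum_div, ← Finset.mul_sum, ← Finset.sum_mul]
  rw [sum_sq_fiber]
  have hb := collision_bound n m t S hS ε hε 𝓖 h𝓖 hAU
  have hFp : (0 : ℝ) < ((2 ^ (n - t) : ℕ) : ℝ) := by positivity
  have hNp : (0 : ℝ) < ((2 : ℝ) ^ n * 𝓖.card)⁻¹ := by positivity
  rw [div_le_iff₀ (mul_pos hFp hNp)]
  calc _ ≤ 2 ^ m * ((2 ^ n * (𝓖.card + 2 ^ (n - t) * (ε * 𝓖.card))) *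
        (((2 : ℝ) ^ n * 𝓖.card)⁻¹) ^ 2) := by gcongr
    _ = _ := by
      push_cast
      rw [pow_add, hF]
      field_simp
end

section
/- Let G be a simple graph on a vertex type V, let u, v ∈ V, and let p_0, …, p_f be f+1 walks in G from u to v such that for all i ≠ j, the internal vertices of p_i and p_j are disjoint (i.e., (support of p_i \ {u, v}) ∩ (support of p_j \ {u, v}) = ∅). Then for every finite set M ⊆ V of vertices with |M| ≤ f, u ∉ M, and v ∉ M, there exists an index i such that the support of p_i is disjoint from M. -/
/-- Given `f+1` internally vertex-disjoint walks from `u` to `v` in a simple graph, for any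
set `M` of at most `f` vertices avoiding `u` and `v`, some walk avoids `M` entirely. -/
theorem stmt_10 {V : Type*} [DecidableEq V] (G : SimpleGraph V) (u v : V) (f : ℕ)
    (p : Fin (f + 1) → G.Walk u v)
    (hdisj : ∀ i j, i ≠ j →
      (((p i).support.toFinset \ {u, v}) ∩ ((p j).support.toFinset \ {u, v})) = ∅)
    (M : Finset V) (hM : M.card ≤ f) (hu : u ∉ M) (hv : v ∉ M) :
    ∃ i, ∀ x ∈ (p i).support, x ∉ M := by
  by_contra hcon
  push Not at hcon
  choose g hg hgM using hcon
  have hinj : Function.Injective g := by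
    intro i j hij
    by_contra hne
    have h := hdisj i j hne
    have hgu : g i ≠ u := fun e => hu (e ▸ hgM i)
    have hgv : g i ≠ v := fun e => hv (e ▸ hgM i)
    have hj : g i ∈ (p j).support := by
      rw [hij]
      exact hg j
    have hmem : g i ∈ ((p i).support.toFinset \ {u, v}) ∩ ((p j).support.toFinset \ {u, v}) := by
      simp [hg i, hj, hgu, hgv]
    rw [h] at hmem
    simp at hmem
  have hcard := Finset.card_le_card_of_injOn (s := Finset.univ) (t := M) g
    (fun i _ => hgM i) (fun i _ j _ h => hinj h)
  simp at hcard
  omega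
end
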